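/- arXiv:2405.00778 — 2 statements merged into one kernel-verified Lean document; each statement's English description precedes it below -/
import Mathlib

section
/- Let 0 ≤ a ≤ m and 0 ≤ b ≤ n with m − a ≤ 2. If C_1 and C_2 are distinct minimal Laman violators in [m]×[n], then for every element e ∈ C_1 ∪ C_2, the set (C_1 ∪ C_2) ∖ {e} violates the (a,b)-Laman condition. (Consequently the minimal Laman violators satisfy the circuit-elimination axiom and are the circuits of a matroid on [m]×[n].) -/
open scoped Classical

noncomputable section

/-- `U` violates the `(a,b)`-Laman condition: there are `S ⊆ [m]`, `T ⊆ [n]` with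
`|S| ≥ a`, `|T| ≥ b` and `|U ∩ (S×T)| > |S|·b + |T|·a − a·b` (stated additively to
avoid truncated subtraction). -/
def ViolatesLaman (m n a b : ℕ) (U : Finset (Fin m × Fin n)) : Prop :=
  ∃ S : Finset (Fin m), ∃ T : Finset (Fin n), a ≤ S.card ∧ b ≤ T.card ∧
    S.card * b + T.card * a < (U ∩ S ×ˢ T).card + a * b

/-- `U` is a minimal set violating the `(a,b)`-Laman condition. -/
def MinimalLamanViolator (m n a b : ℕ) (U : Finset (Fin m × Fin n)) : Prop :=
  ViolatesLaman m n a b U ∧ ∀ V : Finset (Fin m × Fin n), V ⊂ U → ¬ ViolatesLaman m n a b V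

/-!
The bound `f(S, T) = |S| b + |T| a - a b` is modular on pairs `(S, T)`, and `|S| |T| - f(S, T) =
(|S| - a) (|T| - b)`. A minimal violator `C` exceeds `f` on its minimal rectangle `S × T`, and
this rectangle satisfies `|S| > a` and `|T| > b`. For distinct minimal violators `C₁` and `C₂`,
the set `C₁ ∩ C₂` is not a violator, so `|C₁ ∩ C₂|` is at most `f` of the intersection of the two
rectangles, provided that intersection has at least `a` rows or at least `b` columns: if exactly
one of these holds, the right-hand side of the formula for `|S| |T| - f(S, T)` is nonpositive.
Modularity then shows that `|C₁ ∪ C₂|` exceeds `f` of the union of rows and the union of columns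
by at least two, so deleting one element leaves a violator. When there are at most `a + 2` rows,
two sets of more than `a` rows share at least `a` of them.
-/

open Finset

variable {α β : Type*} {a b : ℕ}

/-- The number `|S| b + |T| a - a b` of elements that the `(a, b)`-Laman condition allows in the
rectangle `S × T`. It is an integer so that the subtraction is not truncated. -/
def lamanBound (a b : ℕ) (S : Finset α) (T : Finset β) : ℤ :=
  #S * b + #T * a - a * b

theorem lamanBound_mono {S S' : Finset α} {T T' : Finset β} (hS : S ⊆ S') (hT : T ⊆ T') :
    lamanBound a b S T ≤ lamanBound a b S' T' := by
  unfold lamanBound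
  gcongr

theorem card_mul_card_sub_lamanBound (S : Finset α) (T : Finset β) :
    (#S * #T : ℤ) - lamanBound a b S T = (#S - a) * (#T - b) := by
  unfold lamanBound
  ring

theorem card_le_lamanBound_of_subset_product {S : Finset α} {T : Finset β} {U : Finset (α × β)}
    (hU : U ⊆ S ×ˢ T) (hST : ((#S : ℤ) - a) * (#T - b) ≤ 0) :
    (#U : ℤ) ≤ lamanBound a b S T := by
  have hcard : (#U : ℤ) ≤ #S * #T := mod_cast card_product S T ▸ card_le_card hU
  linarith [card_mul_card_sub_lamanBound (a := a) (b := b) S T]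

variable [DecidableEq α] [DecidableEq β]

theorem lamanBound_union_add_inter (S₁ S₂ : Finset α) (T₁ T₂ : Finset β) :
    lamanBound a b (S₁ ∪ S₂) (T₁ ∪ T₂) + lamanBound a b (S₁ ∩ S₂) (T₁ ∩ T₂) =
      lamanBound a b S₁ T₁ + lamanBound a b S₂ T₂ := by
  have hS : (#(S₁ ∪ S₂) + #(S₁ ∩ S₂) : ℤ) = #S₁ + #S₂ := mod_cast card_union_add_card_inter S₁ S₂
  have hT : (#(T₁ ∪ T₂) + #(T₁ ∩ T₂) : ℤ) = #T₁ + #T₂ := mod_cast card_union_add_card_inter T₁ T₂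
  unfold lamanBound
  linear_combination (b : ℤ) * hS + (a : ℤ) * hT

/-- Violation of the `(a, b)`-Laman condition by a finite subset of a product of two arbitrary
types; on `Fin m × Fin n` it agrees with `ViolatesLaman`. -/
def IsLamanViolator (a b : ℕ) (U : Finset (α × β)) : Prop :=
  ∃ (S : Finset α) (T : Finset β), a ≤ #S ∧ b ≤ #T ∧ lamanBound a b S T < #(U ∩ S ×ˢ T)

theorem violatesLaman_iff_isLamanViolator {m n : ℕ} {U : Finset (Fin m × Fin n)} :
    ViolatesLaman m n a b U ↔ IsLamanViolator a b U := by
  simp only [ViolatesLaman, IsLamanViolator, lamanBound, sub_lt_iff_lt_add]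
  norm_cast

theorem minimalLamanViolator_iff_minimal {m n : ℕ} {U : Finset (Fin m × Fin n)} :
    MinimalLamanViolator m n a b U ↔ Minimal (IsLamanViolator a b) U := by
  simp only [MinimalLamanViolator, violatesLaman_iff_isLamanViolator, minimal_iff_forall_lt]

theorem isLamanViolator_of_lamanBound_lt_card {S : Finset α} {T : Finset β} {U : Finset (α × β)}
    (hS : a ≤ #S) (hT : b ≤ #T) (hU : U ⊆ S ×ˢ T) (hlt : lamanBound a b S T < #U) :
    IsLamanViolator a b U :=
  ⟨S, T, hS, hT, by rwa [inter_eq_left.mpr hU]⟩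

theorem card_le_lamanBound_of_not_isLamanViolator {S : Finset α} {T : Finset β}
    {U : Finset (α × β)} (hU : ¬ IsLamanViolator a b U) (hsub : U ⊆ S ×ˢ T)
    (hST : a ≤ #S ∨ b ≤ #T) : (#U : ℤ) ≤ lamanBound a b S T := by
  by_cases hboth : a ≤ #S ∧ b ≤ #T
  · exact not_lt.mp fun hlt ↦
      hU (isLamanViolator_of_lamanBound_lt_card hboth.1 hboth.2 hsub hlt)
  · refine card_le_lamanBound_of_subset_product hsub (mul_nonpos_iff.mpr ?_)
    omega

section Minimal

variable {C C₁ C₂ : Finset (α × β)}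

theorem exists_subset_product_of_minimal (hC : Minimal (IsLamanViolator a b) C) :
    ∃ (S : Finset α) (T : Finset β),
      a ≤ #S ∧ b ≤ #T ∧ C ⊆ S ×ˢ T ∧ lamanBound a b S T < #C := by
  obtain ⟨S, T, hS, hT, hlt⟩ := hC.prop
  have hviol : IsLamanViolator a b (C ∩ S ×ˢ T) :=
    isLamanViolator_of_lamanBound_lt_card hS hT inter_subset_right hlt
  have hsub : C ⊆ S ×ˢ T := inter_eq_left.mp (hC.eq_of_le hviol inter_subset_left)
  exact ⟨S, T, hS, hT, hsub, by rwa [inter_eq_left.mpr hsub] at hlt⟩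

theorem lamanBound_image_lt_card_of_minimal (hC : Minimal (IsLamanViolator a b) C) :
    lamanBound a b (C.image Prod.fst) (C.image Prod.snd) < #C := by
  obtain ⟨S, T, -, -, hsub, hlt⟩ := exists_subset_product_of_minimal hC
  have hfst : C.image Prod.fst ⊆ S := (image_mono _ hsub).trans subset_product_image_fst
  have hsnd : C.image Prod.snd ⊆ T := (image_mono _ hsub).trans subset_product_image_snd
  exact (lamanBound_mono hfst hsnd).trans_lt hlt

theorem lt_card_image_fst_of_minimal (hC : Minimal (IsLamanViolator a b) C) :
    a < #(C.image Prod.fst) := by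
  obtain ⟨S, T, -, hT, hsub, hlt⟩ := exists_subset_product_of_minimal hC
  have hfst : C.image Prod.fst ⊆ S := (image_mono _ hsub).trans subset_product_image_fst
  have hsub' : C ⊆ C.image Prod.fst ×ˢ T := fun x hx ↦
    mem_product.mpr ⟨mem_image_of_mem _ hx, (mem_product.mp (hsub hx)).2⟩
  by_contra! hle
  have hcard : (#C : ℤ) ≤ lamanBound a b (C.image Prod.fst) T :=
    card_le_lamanBound_of_subset_product hsub'
      (mul_nonpos_of_nonpos_of_nonneg (by omega) (by omega))
  exact (hcard.trans (lamanBound_mono hfst Subset.rfl)).not_gt hlt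

theorem lt_card_image_snd_of_minimal (hC : Minimal (IsLamanViolator a b) C) :
    b < #(C.image Prod.snd) := by
  obtain ⟨S, T, hS, -, hsub, hlt⟩ := exists_subset_product_of_minimal hC
  have hsnd : C.image Prod.snd ⊆ T := (image_mono _ hsub).trans subset_product_image_snd
  have hsub' : C ⊆ S ×ˢ C.image Prod.snd := fun x hx ↦
    mem_product.mpr ⟨(mem_product.mp (hsub hx)).1, mem_image_of_mem _ hx⟩
  by_contra! hle
  have hcard : (#C : ℤ) ≤ lamanBound a b S (C.image Prod.snd) :=
    card_le_lamanBound_of_subset_product hsub'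
      (mul_nonpos_of_nonneg_of_nonpos (by omega) (by omega))
  exact (hcard.trans (lamanBound_mono Subset.rfl hsnd)).not_gt hlt

theorem not_isLamanViolator_inter_of_minimal (hne : C₁ ≠ C₂)
    (h₁ : Minimal (IsLamanViolator a b) C₁) (h₂ : Minimal (IsLamanViolator a b) C₂) :
    ¬ IsLamanViolator a b (C₁ ∩ C₂) := fun hviol ↦
  hne ((h₁.eq_of_le hviol inter_subset_left).symm.trans
    (h₂.eq_of_le hviol inter_subset_right))

theorem le_card_inter_image_fst_of_minimal [Fintype α] (hα : Fintype.card α ≤ a + 2)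
    (h₁ : Minimal (IsLamanViolator a b) C₁) (h₂ : Minimal (IsLamanViolator a b) C₂) :
    a ≤ #(C₁.image Prod.fst ∩ C₂.image Prod.fst) := by
  have hrows₁ := lt_card_image_fst_of_minimal h₁
  have hrows₂ := lt_card_image_fst_of_minimal h₂
  have hunion := card_le_univ (C₁.image Prod.fst ∪ C₂.image Prod.fst)
  have hsum := card_union_add_card_inter (C₁.image Prod.fst) (C₂.image Prod.fst)
  omega

theorem lamanBound_add_two_le_card_union_of_minimal (hne : C₁ ≠ C₂)
    (h₁ : Minimal (IsLamanViolator a b) C₁) (h₂ : Minimal (IsLamanViolator a b) C₂)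
    (hmeet : a ≤ #(C₁.image Prod.fst ∩ C₂.image Prod.fst) ∨
      b ≤ #(C₁.image Prod.snd ∩ C₂.image Prod.snd)) :
    lamanBound a b ((C₁ ∪ C₂).image Prod.fst) ((C₁ ∪ C₂).image Prod.snd) + 2 ≤ #(C₁ ∪ C₂) := by
  have hsub : C₁ ∩ C₂ ⊆ (C₁.image Prod.fst ∩ C₂.image Prod.fst) ×ˢ
      (C₁.image Prod.snd ∩ C₂.image Prod.snd) := by
    rw [← product_inter_product]
    exact inter_subset_inter subset_product subset_product
  have hinter := card_le_lamanBound_of_not_isLamanViolator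
    (not_isLamanViolator_inter_of_minimal hne h₁ h₂) hsub hmeet
  have hmodular := lamanBound_union_add_inter (a := a) (b := b) (C₁.image Prod.fst)
    (C₂.image Prod.fst) (C₁.image Prod.snd) (C₂.image Prod.snd)
  have hcard := card_union_add_card_inter C₁ C₂
  have hexcess₁ := lamanBound_image_lt_card_of_minimal h₁
  have hexcess₂ := lamanBound_image_lt_card_of_minimal h₂
  rw [image_union, image_union]
  omega

theorem laman_circuit_axiom_general (hne : C₁ ≠ C₂)
    (h₁ : Minimal (IsLamanViolator a b) C₁) (h₂ : Minimal (IsLamanViolator a b) C₂)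
    (hmeet : a ≤ #(C₁.image Prod.fst ∩ C₂.image Prod.fst) ∨
      b ≤ #(C₁.image Prod.snd ∩ C₂.image Prod.snd)) :
    ∀ e ∈ C₁ ∪ C₂, IsLamanViolator a b ((C₁ ∪ C₂).erase e) := by
  intro e he
  have hrows : a ≤ #((C₁ ∪ C₂).image Prod.fst) :=
    (lt_card_image_fst_of_minimal h₁).le.trans (card_le_card (image_mono _ subset_union_left))
  have hcols : b ≤ #((C₁ ∪ C₂).image Prod.snd) :=
    (lt_card_image_snd_of_minimal h₁).le.trans (card_le_card (image_mono _ subset_union_left))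
  refine isLamanViolator_of_lamanBound_lt_card hrows hcols
    ((erase_subset _ _).trans subset_product) ?_
  have hexcess := lamanBound_add_two_le_card_union_of_minimal hne h₁ h₂ hmeet
  have herase := card_erase_add_one he
  omega

end Minimal

theorem laman_circuit_axiom (m n a b : ℕ) (ha : a ≤ m) (hb : b ≤ n) (hma : m ≤ a + 2)
    (C₁ C₂ : Finset (Fin m × Fin n)) (hne : C₁ ≠ C₂)
    (h₁ : MinimalLamanViolator m n a b C₁) (h₂ : MinimalLamanViolator m n a b C₂) :
    ∀ e ∈ C₁ ∪ C₂, ViolatesLaman m n a b ((C₁ ∪ C₂).erase e) := by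
  simp only [minimalLamanViolator_iff_minimal, violatesLaman_iff_isLamanViolator] at h₁ h₂ ⊢
  exact laman_circuit_axiom_general hne h₁ h₂
    (.inl (le_card_inter_image_fst_of_minimal (by simpa using hma) h₁ h₂))
end
end

section
/- Let 0 ≤ a ≤ m and 0 ≤ b ≤ n with m − a ≤ 2. A set C ⊆ [m]×[n] is a circuit of the bipartite rigidity matroid B_{m,n}(a,b) (i.e., a minimal set indexing linearly dependent columns of R_{m,n}(a,b)) if and only if C is a minimal Laman violator. -/
open scoped Classical

noncomputable section

/-- The rational function field `ℚ(x_{pj}, y_{qℓ})` with `(p,j) ∈ [m]×[a]`,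
`(q,ℓ) ∈ [n]×[b]`. -/
abbrev RField (m n a b : ℕ) :=
  FractionRing (MvPolynomial ((Fin m × Fin a) ⊕ (Fin n × Fin b)) ℚ)

/-- The column of the bipartite rigidity matrix `R_{m,n}(a,b)` labeled by
`e ∈ [m]×[n]`: the row labeled `(j,k) ∈ [a]×[n]` has entry `x_{e.1, j}` if `e.2 = k`
and `0` otherwise, and the row labeled `(ℓ,i) ∈ [b]×[m]` has entry `y_{e.2, ℓ}` if
`e.1 = i` and `0` otherwise. -/
noncomputable def rigCol (m n a b : ℕ) (e : Fin m × Fin n) :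
    (Fin a × Fin n) ⊕ (Fin b × Fin m) → RField m n a b := fun row =>
  match row with
  | Sum.inl (j, k) =>
      if e.2 = k then
        algebraMap (MvPolynomial ((Fin m × Fin a) ⊕ (Fin n × Fin b)) ℚ) (RField m n a b)
          (MvPolynomial.X (Sum.inl (e.1, j)))
      else 0
  | Sum.inr (l, i) =>
      if e.1 = i then
        algebraMap (MvPolynomial ((Fin m × Fin a) ⊕ (Fin n × Fin b)) ℚ) (RField m n a b)
          (MvPolynomial.X (Sum.inr (e.2, l)))
      else 0

/-- `G` is independent in the bipartite rigidity matroid `B_{m,n}(a,b)`: the columns of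
`R_{m,n}(a,b)` indexed by `G` are linearly independent. -/
def RigIndep (m n a b : ℕ) (G : Set (Fin m × Fin n)) : Prop :=
  LinearIndependent (RField m n a b) (fun e : G => rigCol m n a b e)

/-- `C` is a circuit of the bipartite rigidity matroid `B_{m,n}(a,b)`: a minimal set
indexing linearly dependent columns of `R_{m,n}(a,b)`. -/
def RigCircuit (m n a b : ℕ) (C : Finset (Fin m × Fin n)) : Prop :=
  ¬ RigIndep m n a b (↑C : Set (Fin m × Fin n)) ∧
    ∀ D : Finset (Fin m × Fin n), D ⊂ C → RigIndep m n a b (↑D : Set (Fin m × Fin n))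

/-!
A linear dependency among the columns of the rigidity matrix indexed by `U` is a stress: a matrix
`M` supported on `U` with `Mᵀ * x = 0` and `M * y = 0`.

If `U` violates the Laman condition on `S × T`, let the columns of `P` and `Q` be `|S| - a` and
`|T| - b` independent vectors supported on `S` and `T` and orthogonal to the columns of `x` and `y`.
The matrices `P * N * Qᵀ` form a space of dimension `(|S| - a) * (|T| - b)`, and vanishing on
`S × T` outside `U` imposes fewer conditions than that, so there is a nonzero stress.

Conversely, independence may be checked after specializing the indeterminates. Take `x` to be a
Vandermonde matrix: then a column of a stress vanishes as soon as its support has at most `a`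
elements. Since `m ≤ a + 2`, the remaining columns of `U` have `a + 1` or `a + 2 = m` elements.
The Laman condition on all of `[m]`, and on each set of `a + 1` rows, lets one place these columns
in `b` classes, each consisting of a single column or of two distinct columns of size `a + 1`.
Taking the columns of `y` to be the indicators of the classes forces every stress to vanish.
-/

open Finset Matrix

section Matrices

variable {ι κ α R K : Type*}

lemma exists_mul_eq_one_of_linearIndependent_col [Field K] [Fintype ι] [Finite κ] [DecidableEq κ]
    {A : Matrix ι κ K} (hA : LinearIndependent K A.col) : ∃ B : Matrix κ ι K, B * A = 1 := by
  cases nonempty_fintype κ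
  obtain ⟨g, hg⟩ := A.mulVecLin.exists_leftInverse_of_injective
    (LinearMap.ker_eq_bot.2 (mulVec_injective_iff.2 hA))
  refine ⟨LinearMap.toMatrix' g, toLin'.injective ?_⟩
  rw [toLin'_mul, toLin'_toMatrix', toLin'_one]
  exact hg

lemma linearIndependent_col_map_of_specialization {k S : Type*} [CommRing R] [Field k] [CommRing S]
    [IsDomain S] [Finite ι] [Finite κ] {φ : R →+* k} (hφ : Function.Surjective φ) {f : R →+* S}
    (hf : Function.Injective f) {A : Matrix ι κ R} (hA : LinearIndependent k (A.map φ).col) :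
    LinearIndependent S (A.map f).col := by
  cases nonempty_fintype ι
  cases nonempty_fintype κ
  obtain ⟨B, hB⟩ := exists_mul_eq_one_of_linearIndependent_col hA
  obtain ⟨B', rfl⟩ : ∃ B' : Matrix κ ι R, B'.map φ = B :=
    ⟨B.map (Function.surjInv hφ), by ext; simp [Function.surjInv_eq]⟩
  have hdet : (B' * A).det ≠ 0 := fun h0 ↦ by
    simpa [RingHom.map_det, RingHom.mapMatrix_apply, Matrix.map_mul, hB] using congrArg φ h0
  have hdet_map : (B'.map f * A.map f).det ≠ 0 := by
    rwa [← Matrix.map_mul, ← RingHom.mapMatrix_apply, ← RingHom.map_det, map_ne_zero_iff f hf]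
  rw [← mulVec_injective_iff]
  refine Function.Injective.of_comp (f := (B'.map f).mulVec) ?_
  simpa only [Function.comp_def, mulVec_mulVec] using mulVec_injective_of_det_ne_zero hdet_map

lemma exists_linearIndependent_col_transpose_mul_eq_zero [Field K] [Fintype ι] [Fintype α]
    (A : Matrix ι α K) (S : Finset ι) {s : ℕ} (hs : s + Fintype.card α ≤ #S) :
    ∃ P : Matrix ι (Fin s) K,
      (∀ i ∉ S, P i = 0) ∧ Pᵀ * A = 0 ∧ LinearIndependent K P.col := by
  let L := (LinearMap.funLeft K K (Subtype.val : {i // i ∉ S} → ι)).prod A.vecMulLinear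
  have hker : s ≤ Module.finrank K (LinearMap.ker L) := by
    have hrank := L.finrank_range_add_finrank_ker
    have hrange := Submodule.finrank_le (LinearMap.range L)
    have hcompl : Fintype.card {i // i ∉ S} + #S = Fintype.card ι := by
      rw [Fintype.card_subtype_compl, Fintype.card_coe, Nat.sub_add_cancel (card_le_univ S)]
    simp only [Module.finrank_prod, Module.finrank_fintype_fun_eq_card] at hrank hrange
    omega
  obtain ⟨v, hv⟩ := exists_linearIndependent_of_le_finrank hker
  have hv_mem (u : Fin s) : (fun i : {i // i ∉ S} ↦ (v u : ι → K) i) = 0 ∧ (v u : ι → K) ᵥ* A = 0 :=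
    Prod.mk_eq_zero.1 (LinearMap.mem_ker.1 (v u).2)
  refine ⟨(Matrix.of fun u ↦ (v u : ι → K))ᵀ, fun i hi ↦ ?_, ?_, ?_⟩
  · ext u
    exact congrFun (hv_mem u).1 ⟨i, hi⟩
  · ext u j
    exact congrFun (hv_mem u).2 j
  · exact hv.map' (LinearMap.ker L).subtype (LinearMap.ker L).ker_subtype

lemma eq_zero_of_vecMul_pow_eq_zero [CommRing R] [IsDomain R] [Fintype ι] {a : ℕ} {t : ι → R}
    (ht : Function.Injective t) {v : ι → R} {W : Finset ι} (hW : #W ≤ a)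
    (hv : ∀ p ∉ W, v p = 0) (h : v ᵥ* (Matrix.of fun p (j : Fin a) ↦ t p ^ (j : ℕ)) = 0) :
    v = 0 := by
  let e := W.equivFin
  have hzero : (fun k ↦ v (e.symm k)) = 0 := by
    refine eq_zero_of_forall_pow_sum_mul_pow_eq_zero (f := fun k ↦ t (e.symm k))
      (ht.comp (Subtype.val_injective.comp e.symm.injective)) fun j ↦ ?_
    calc ∑ k, v (e.symm k) * t (e.symm k) ^ (j : ℕ)
        = ∑ p : W, v p * t p ^ (j : ℕ) := e.symm.sum_comp fun p : W ↦ v p * t p ^ (j : ℕ)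
      _ = ∑ p ∈ W, v p * t p ^ (j : ℕ) := W.sum_coe_sort fun p ↦ v p * t p ^ (j : ℕ)
      _ = ∑ p, v p * t p ^ (j : ℕ) :=
        sum_subset (subset_univ W) fun p _ hp ↦ by rw [hv p hp, zero_mul]
      _ = 0 := congrFun h ⟨j, j.2.trans_le hW⟩
  funext p
  by_cases hp : p ∈ W
  · simpa using congrFun hzero (e ⟨p, hp⟩)
  · exact hv p hp

end Matrices

section Stress

variable {ι κ α β R S K : Type*} [DecidableEq ι] [DecidableEq κ]

/-- The bipartite rigidity matrix of two matrices `x` and `y` over any ring; the matrix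
`R_{m,n}(a,b)` is the case of independent indeterminates. -/
def rigidityMatrix [Zero R] (x : Matrix ι α R) (y : Matrix κ β R) :
    Matrix ((α × κ) ⊕ (β × ι)) (ι × κ) R :=
  Matrix.of fun row e ↦ match row with
    | Sum.inl (j, k) => if e.2 = k then x e.1 j else 0
    | Sum.inr (l, i) => if e.1 = i then y e.2 l else 0

lemma map_rigidityMatrix [NonAssocSemiring R] [NonAssocSemiring S] (f : R →+* S) (x : Matrix ι α R)
    (y : Matrix κ β R) :
    (rigidityMatrix x y).map f = rigidityMatrix (x.map f) (y.map f) := by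
  ext (_ | _) _ <;> simp [rigidityMatrix, apply_ite f]

variable [Fintype ι] [Fintype κ]

lemma rigidityMatrix_mulVec_eq_zero_iff [CommSemiring R] (x : Matrix ι α R) (y : Matrix κ β R)
    (M : Matrix ι κ R) :
    (rigidityMatrix x y *ᵥ fun e ↦ M e.1 e.2) = 0 ↔ Mᵀ * x = 0 ∧ M * y = 0 := by
  have hleft (j : α) (q : κ) :
      (rigidityMatrix x y *ᵥ fun e ↦ M e.1 e.2) (Sum.inl (j, q)) = (Mᵀ * x) q j := by
    simp [rigidityMatrix, mulVec, dotProduct, Matrix.mul_apply, Fintype.sum_prod_type, mul_comm]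
  have hright (l : β) (p : ι) :
      (rigidityMatrix x y *ᵥ fun e ↦ M e.1 e.2) (Sum.inr (l, p)) = (M * y) p l := by
    simp [rigidityMatrix, mulVec, dotProduct, Matrix.mul_apply, Fintype.sum_prod_type_right,
      mul_comm]
  simp only [funext_iff, Sum.forall, Prod.forall, hleft, hright, Pi.zero_apply, ← Matrix.ext_iff,
    Matrix.zero_apply]
  rw [forall_comm, forall_comm (α := β)]

/-- A stress on `U`: a matrix supported on `U` whose columns are orthogonal to the columns of `x`
and whose rows are orthogonal to the columns of `y`. Stresses are the linear dependencies among
the columns of the rigidity matrix indexed by `U`. -/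
structure IsStressOn [Semiring R] (x : Matrix ι α R) (y : Matrix κ β R) (U : Finset (ι × κ))
    (M : Matrix ι κ R) : Prop where
  apply_eq_zero : ∀ p q, (p, q) ∉ U → M p q = 0
  transpose_mul : Mᵀ * x = 0
  mul : M * y = 0

lemma linearIndepOn_col_rigidityMatrix_iff [CommRing R] {x : Matrix ι α R} {y : Matrix κ β R}
    {U : Finset (ι × κ)} :
    LinearIndepOn R (rigidityMatrix x y).col U ↔ ∀ M, IsStressOn x y U M → M = 0 := by
  have hsum (M : Matrix ι κ R) (hM : ∀ p q, (p, q) ∉ U → M p q = 0) :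
      ∑ e ∈ U, M e.1 e.2 • (rigidityMatrix x y).col e = 0 ↔ Mᵀ * x = 0 ∧ M * y = 0 := by
    rw [← rigidityMatrix_mulVec_eq_zero_iff, mulVec_eq_sum,
      ← sum_subset (subset_univ U) fun e _ he ↦ by simp [hM e.1 e.2 he]]
    simp only [op_smul_eq_smul]
    rfl
  rw [linearIndepOn_finset_iff]
  constructor
  · rintro h M ⟨hM, hx, hy⟩
    ext p q
    by_cases hpq : (p, q) ∈ U
    · exact h (fun e ↦ M e.1 e.2) ((hsum M hM).2 ⟨hx, hy⟩) (p, q) hpq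
    · exact hM p q hpq
  · intro h f hf e he
    let M : Matrix ι κ R := Matrix.of fun p q ↦ if (p, q) ∈ U then f (p, q) else 0
    have hM (p : ι) (q : κ) (hpq : (p, q) ∉ U) : M p q = 0 := if_neg hpq
    have hMf (e : ι × κ) (he : e ∈ U) : M e.1 e.2 = f e := if_pos he
    obtain ⟨hx, hy⟩ := (hsum M hM).1 <| hf ▸ sum_congr rfl fun e he ↦ by rw [hMf e he]
    rw [← hMf e he, h M ⟨hM, hx, hy⟩, Matrix.zero_apply]

lemma exists_isStressOn_ne_zero [Field K] [Fintype α] [Fintype β] (x : Matrix ι α K)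
    (y : Matrix κ β K) {U : Finset (ι × κ)} {S : Finset ι} {T : Finset κ}
    (hS : Fintype.card α ≤ #S) (hT : Fintype.card β ≤ #T)
    (hU : #S * Fintype.card β + #T * Fintype.card α <
      #(U ∩ S ×ˢ T) + Fintype.card α * Fintype.card β) :
    ∃ M, IsStressOn x y U M ∧ M ≠ 0 := by
  obtain ⟨s, hs⟩ := Nat.exists_eq_add_of_le' hS
  obtain ⟨t, ht⟩ := Nat.exists_eq_add_of_le' hT
  obtain ⟨P, hP_supp, hPx, hP⟩ := exists_linearIndependent_col_transpose_mul_eq_zero x S hs.ge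
  obtain ⟨Q, hQ_supp, hQy, hQ⟩ := exists_linearIndependent_col_transpose_mul_eq_zero y T ht.ge
  let restrict : Matrix (Fin s) (Fin t) K →ₗ[K] (↥(S ×ˢ T \ U) → K) :=
    { toFun N e := (P * N * Qᵀ) e.1.1 e.1.2
      map_add' N N' := by ext; simp [Matrix.mul_add, Matrix.add_mul]
      map_smul' c N := by ext; simp }
  have hcard : #(S ×ˢ T \ U) < s * t := by
    have := card_sdiff_add_card_inter (S ×ˢ T) U
    rw [card_product, inter_comm] at this
    rw [hs, ht] at hU this
    nlinarith
  obtain ⟨N, hN, hN0⟩ := Submodule.exists_mem_ne_zero_of_ne_bot <|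
    restrict.ker_ne_bot_of_finrank_lt <| by
      rwa [Module.finrank_fintype_fun_eq_card, Fintype.card_coe, Module.finrank_matrix,
        Module.finrank_self, mul_one, Fintype.card_fin, Fintype.card_fin]
  refine ⟨P * N * Qᵀ, ⟨fun p q hpq ↦ ?_, ?_, ?_⟩, fun hzero ↦ hN0 ?_⟩
  · by_cases hp : p ∈ S
    · by_cases hq : q ∈ T
      · exact congrFun (LinearMap.mem_ker.1 hN) ⟨(p, q), by simp [hp, hq, hpq]⟩
      · simp [Matrix.mul_apply, hQ_supp q hq]
    · simp [Matrix.mul_apply, hP_supp p hp]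
  · rw [transpose_mul, transpose_mul, Matrix.mul_assoc, Matrix.mul_assoc, hPx]
    simp
  · rw [Matrix.mul_assoc, hQy, Matrix.mul_zero]
  · obtain ⟨P', hP'⟩ := exists_mul_eq_one_of_linearIndependent_col hP
    obtain ⟨Q', hQ'⟩ := exists_mul_eq_one_of_linearIndependent_col hQ
    calc N = (P' * P) * N * (Q' * Q)ᵀ := by simp [hP', hQ']
      _ = P' * (P * N * Qᵀ) * Q'ᵀ := by simp only [transpose_mul, Matrix.mul_assoc]
      _ = 0 := by simp [hzero]

end Stress

section Columns

variable {ι κ R β : Type*} [Fintype ι] [DecidableEq ι] [DecidableEq κ]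

/-- The support `{p | (p, q) ∈ U}` of column `q`. -/
def column (U : Finset (ι × κ)) (q : κ) : Finset ι := {p | (p, q) ∈ U}

lemma mem_column {U : Finset (ι × κ)} {p : ι} {q : κ} : p ∈ column U q ↔ (p, q) ∈ U := by
  simp [column]

lemma card_inter_product_eq_sum_column (U : Finset (ι × κ)) (S : Finset ι) (T : Finset κ) :
    #(U ∩ S ×ˢ T) = ∑ q ∈ T, #(column U q ∩ S) := by
  calc #(U ∩ S ×ˢ T) = ∑ e ∈ S ×ˢ T, if e ∈ U then 1 else 0 := by
        rw [inter_comm, ← filter_mem_eq_inter, card_filter]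
    _ = ∑ q ∈ T, ∑ p ∈ S, if p ∈ column U q then 1 else 0 := by
        simp only [sum_product_right, mem_column]
    _ = ∑ q ∈ T, #(column U q ∩ S) := by
        simp only [← card_filter, filter_mem_eq_inter, inter_comm]

-- Orthogonality to the indicator of `{q, q'}` makes columns `q` and `q'` of a stress opposite, so
-- both are supported on the common part of the columns of `U`, which is too small.
lemma IsStressOn.eq_zero_of_pairs [CommRing R] [IsDomain R] [Fintype κ] {a : ℕ} {t : ι → R}
    (ht : Function.Injective t) {U : Finset (ι × κ)} {P : β → Finset κ}
    (hP : ∀ q, a < #(column U q) →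
      ∃ l q', P l = {q, q'} ∧ (q' = q ∨ #(column U q ∩ column U q') ≤ a))
    {M : Matrix ι κ R} (hM : IsStressOn (Matrix.of fun p (j : Fin a) ↦ t p ^ (j : ℕ))
      (Matrix.of fun q l ↦ if q ∈ P l then 1 else 0) U M) : M = 0 := by
  have column_eq_zero {q : κ} {W : Finset ι} (hW : #W ≤ a) (hMW : ∀ p ∉ W, M p q = 0) (p : ι) :
      M p q = 0 :=
    congrFun (eq_zero_of_vecMul_pow_eq_zero (v := Mᵀ q) ht hW hMW
      (congrFun hM.transpose_mul q)) p
  have supported (p : ι) (q : κ) (hp : p ∉ column U q) : M p q = 0 :=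
    hM.apply_eq_zero p q (mt mem_column.2 hp)
  have block_sum (p : ι) (l : β) : ∑ q ∈ P l, M p q = 0 := by
    simpa [Matrix.mul_apply, sum_ite_mem] using congrFun₂ hM.mul p l
  ext p q
  rcases le_or_gt #(column U q) a with hsmall | hlarge
  · exact column_eq_zero hsmall (supported · q) p
  obtain ⟨l, q', hl, hq'⟩ := hP q hlarge
  by_cases hne : q = q'
  · simpa [hl, ← hne] using block_sum p l
  have opposite (p : ι) : M p q + M p q' = 0 := by
    simpa [hl, sum_pair hne] using block_sum p l
  refine column_eq_zero (hq'.resolve_left (Ne.symm hne)) (fun p hp ↦ ?_) p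
  rw [mem_inter, not_and_or] at hp
  rcases hp with hp | hp
  · exact supported p q hp
  · simpa [supported p q' hp] using opposite p

end Columns

section Pairing

variable {κ γ : Type*}

lemma exists_equiv_fin_monotone [Fintype κ] [LinearOrder γ] (g : κ → γ) :
    ∃ r : κ ≃ Fin (Fintype.card κ), Monotone (g ∘ r.symm) := by
  let e := Fintype.equivFin κ
  exact ⟨e.trans (Tuple.sort (g ∘ e.symm)).symm, Tuple.monotone_sort (g ∘ e.symm)⟩

-- Sort by `g` and colour by rank modulo `k`: equal colours are at least `k` ranks apart, whereas
-- the fibres of `g` are blocks of at most `k` consecutive ranks.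
lemma exists_coloring_of_card_fiber_le [Fintype κ] [DecidableEq γ] (g : κ → γ) {d k : ℕ}
    (hcard : Fintype.card κ ≤ d * k) (hfiber : ∀ i, #{q | g q = i} ≤ k) :
    ∃ c : κ → Fin k, (∀ i, #{q | c q = i} ≤ d) ∧ ∀ q q', c q = c q' → g q = g q' → q = q' := by
  let _ : LinearOrder γ := IsWellOrder.linearOrder WellOrderingRel
  obtain ⟨r, hr⟩ := exists_equiv_fin_monotone g
  have hk (q : κ) : 0 < k := (card_pos.2 ⟨q, by simp⟩).trans_le (hfiber (g q))
  refine ⟨fun q ↦ ⟨r q % k, Nat.mod_lt _ (hk q)⟩, fun i ↦ ?_, fun q q' hc hg ↦ ?_⟩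
  · rw [← card_range d]
    refine card_le_card_of_injOn (fun q ↦ r q / k) (fun q _ ↦ ?_) fun q hq q' hq' hdiv ↦ ?_
    · simpa using Nat.div_lt_of_lt_mul ((r q).2.trans_le (hcard.trans_eq (mul_comm d k)))
    · have hmod : (r q : ℕ) % k = r q' % k :=
        Fin.ext_iff.1 ((mem_filter.1 hq).2.trans (mem_filter.1 hq').2.symm)
      exact r.injective <| Fin.ext <| Nat.ext_div_mod hdiv hmod
  · wlog hlt : r q < r q' generalizing q q'
    · rcases (not_lt.1 hlt).lt_or_eq with hgt | heq
      · exact (this q' q hc.symm hg.symm hgt).symm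
      · exact (r.injective heq).symm
    have hgap : k ≤ r q' - r q := by
      have hmod : (r q : ℕ) ≡ r q' [MOD k] := Fin.ext_iff.1 hc
      exact Nat.le_of_dvd (Nat.sub_pos_of_lt hlt) ((Nat.modEq_iff_dvd' hlt.le).1 hmod)
    have hblock : #(Icc (r q) (r q')) ≤ #{x | g x = g q} := by
      refine card_le_card_of_injOn r.symm (fun i hi ↦ ?_) r.symm.injective.injOn
      rw [coe_Icc] at hi
      simpa using le_antisymm (by simpa [hg] using hr hi.2) (by simpa using hr hi.1)
    have := hblock.trans (hfiber (g q))
    rw [Fin.card_Icc] at this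
    omega

lemma exists_mem_eq_pair_of_card_le_two [DecidableEq κ] {s : Finset κ} {q : κ} (hq : q ∈ s)
    (hs : #s ≤ 2) : ∃ q' ∈ s, s = {q, q'} := by
  rcases (s.erase q).eq_empty_or_nonempty with hempty | ⟨q', hq'⟩
  · exact ⟨q, hq, by rw [← insert_erase hq, hempty, insert_empty_eq, pair_eq_singleton]⟩
  · have herase : {q'} = s.erase q :=
      eq_of_subset_of_card_le (singleton_subset_iff.2 hq') <| by
        rw [card_erase_of_mem hq, card_singleton]
        omega
    exact ⟨q', mem_of_mem_erase hq', by rw [herase, insert_erase hq]⟩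

lemma card_inter_le_of_ne [DecidableEq κ] {A B : Finset κ} {k : ℕ} (hA : #A ≤ k + 1)
    (hB : #B ≤ k + 1) (hAB : A ≠ B) : #(A ∩ B) ≤ k := by
  by_contra! hlt
  exact hAB <| (eq_of_subset_of_card_le inter_subset_left (by omega)).symm.trans
    (eq_of_subset_of_card_le inter_subset_right (by omega))

lemma exists_pairing [DecidableEq κ] [DecidableEq γ] (N : Finset κ) (g : κ → γ) {k : ℕ}
    (hcard : #N ≤ 2 * k) (hfiber : ∀ i, #{q ∈ N | g q = i} ≤ k) :
    ∃ P : Fin k → Finset κ,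
      ∀ q ∈ N, ∃ l, ∃ q' ∈ N, P l = {q, q'} ∧ (q' = q ∨ g q' ≠ g q) := by
  let inclusion := Function.Embedding.subtype (· ∈ N)
  have hfiber_coe (i : γ) : #{q : N | g q = i} ≤ k := by
    rw [← card_map inclusion]
    exact (card_le_card fun q ↦ by simp +contextual [inclusion]).trans (hfiber i)
  obtain ⟨c, hc_card, hc_inj⟩ :=
    exists_coloring_of_card_fiber_le (fun q : N ↦ g q) (by simpa using hcard) hfiber_coe
  refine ⟨fun l ↦ ({q | c q = l} : Finset N).map inclusion, fun q hq ↦ ?_⟩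
  obtain ⟨q', hq', hpair⟩ :=
    exists_mem_eq_pair_of_card_le_two (q := ⟨q, hq⟩) (by simp) (hc_card (c ⟨q, hq⟩))
  refine ⟨c ⟨q, hq⟩, q', q'.2, by simp only [hpair, map_insert, map_singleton]; rfl,
    or_iff_not_imp_right.2 fun hg ↦ ?_⟩
  exact congrArg Subtype.val (hc_inj q' ⟨q, hq⟩ (mem_filter.1 hq').2 (not_not.1 hg))

end Pairing

section Laman

variable {m n a b : ℕ} {U : Finset (Fin m × Fin n)}

lemma sum_card_column_inter_le_of_not_violatesLaman (hU : ¬ ViolatesLaman m n a b U)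
    {S : Finset (Fin m)} (hS : a ≤ #S) (T : Finset (Fin n)) :
    ∑ q ∈ T, #(column U q ∩ S) + a * b ≤ #S * b + #T * a := by
  rcases le_or_gt b #T with hT | hT
  · rw [← card_inter_product_eq_sum_column]
    by_contra! hlt
    exact hU ⟨S, T, hS, hT, hlt⟩
  · have : ∑ q ∈ T, #(column U q ∩ S) ≤ #T * #S :=
      sum_le_card_nsmul T _ _ fun q _ ↦ card_le_card inter_subset_right
    nlinarith

lemma card_filter_subset_column_le_of_not_violatesLaman (hU : ¬ ViolatesLaman m n a b U)
    {A : Finset (Fin m)} (hA : #A = a + 1) : #{q | A ⊆ column U q} ≤ b := by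
  have hsum := sum_card_column_inter_le_of_not_violatesLaman hU (by omega : a ≤ #A)
    {q | A ⊆ column U q}
  rw [sum_const_nat fun q hq ↦ by rw [inter_eq_right.2 (mem_filter.1 hq).2], hA] at hsum
  nlinarith

lemma two_mul_card_add_card_le_of_not_violatesLaman (ha : a ≤ m) (hma : m ≤ a + 2)
    (hU : ¬ ViolatesLaman m n a b U) :
    2 * #{q | #(column U q) = a + 2} + #{q | #(column U q) = a + 1} ≤ 2 * b := by
  let F : Finset (Fin n) := {q | #(column U q) = a + 2}
  let N : Finset (Fin n) := {q | #(column U q) = a + 1}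
  have hdisj : Disjoint F N := disjoint_filter.2 fun q _ _ ↦ by omega
  have hF : ∑ q ∈ F, #(column U q) = #F * (a + 2) :=
    sum_const_nat fun q hq ↦ (mem_filter.1 hq).2
  have hN : ∑ q ∈ N, #(column U q) = #N * (a + 1) :=
    sum_const_nat fun q hq ↦ (mem_filter.1 hq).2
  have hsum := sum_card_column_inter_le_of_not_violatesLaman hU (S := univ) (by simpa using ha)
    (F ∪ N)
  simp only [inter_univ, card_univ, Fintype.card_fin] at hsum
  rw [sum_union hdisj, hF, hN, card_union_of_disjoint hdisj] at hsum
  suffices 2 * #F + #N ≤ 2 * b from this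
  nlinarith

lemma card_add_card_column_eq_le_of_not_violatesLaman (hma : m ≤ a + 2)
    (hU : ¬ ViolatesLaman m n a b U) {A : Finset (Fin m)} (hA : #A = a + 1) :
    #{q | #(column U q) = a + 2} + #{q | column U q = A} ≤ b := by
  rw [← card_union_of_disjoint]
  · refine (card_le_card fun q hq ↦ ?_).trans
      (card_filter_subset_column_le_of_not_violatesLaman hU hA)
    simp only [mem_union, mem_filter, mem_univ, true_and] at hq ⊢
    rcases hq with hfull | rfl
    · have : column U q = univ := eq_univ_of_card _ <|
        (card_le_univ _).antisymm (by simpa [hfull] using hma)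
      exact this ▸ subset_univ A
    · exact Subset.rfl
  · exact disjoint_filter.2 fun q _ hfull hq ↦ by rw [hq] at hfull; omega

lemma exists_pairs_of_not_violatesLaman (ha : a ≤ m) (hma : m ≤ a + 2)
    (hU : ¬ ViolatesLaman m n a b U) :
    ∃ P : Fin b → Finset (Fin n), ∀ q, a < #(column U q) →
      ∃ l q', P l = {q, q'} ∧ (q' = q ∨ #(column U q ∩ column U q') ≤ a) := by
  let F : Finset (Fin n) := {q | #(column U q) = a + 2}
  let N : Finset (Fin n) := {q | #(column U q) = a + 1}
  have hFN : 2 * #F + #N ≤ 2 * b :=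
    two_mul_card_add_card_le_of_not_violatesLaman ha hma hU
  have hfiber (A : Finset (Fin m)) : #{q ∈ N | column U q = A} ≤ b - #F := by
    by_cases hA : #A = a + 1
    · have : #F + #{q | column U q = A} ≤ b :=
        card_add_card_column_eq_le_of_not_violatesLaman hma hU hA
      have : #{q ∈ N | column U q = A} ≤ #{q | column U q = A} :=
        card_le_card (filter_subset_filter _ (subset_univ N))
      omega
    · rw [card_eq_zero.2 (filter_eq_empty_iff.2 ?_)]
      · exact Nat.zero_le _
      · rintro q hq rfl
        exact hA (mem_filter.1 hq).2
  obtain ⟨P, hP⟩ := exists_pairing N (column U) (k := b - #F) (by omega) hfiber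
  let e : F ⊕ Fin (b - #F) ≃ Fin b :=
    Fintype.equivFinOfCardEq (by rw [Fintype.card_sum, Fintype.card_coe, Fintype.card_fin]; omega)
  refine ⟨fun l ↦ Sum.elim (fun q : F ↦ {q.1}) P (e.symm l), fun q hq ↦ ?_⟩
  have hle : #(column U q) ≤ a + 2 := (card_le_univ _).trans (by simpa using hma)
  rcases (by omega : #(column U q) = a + 2 ∨ #(column U q) = a + 1) with hfull | hnear
  · exact ⟨e (Sum.inl ⟨q, by simp [F, hfull]⟩), q, by simp, Or.inl rfl⟩
  · obtain ⟨l, q', hq', hl, hne⟩ := hP q (by simp [N, hnear])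
    exact ⟨e (Sum.inr l), q', by simp [hl], hne.imp_right fun hne ↦
      card_inter_le_of_ne hnear.le (mem_filter.1 hq').2.le hne.symm⟩

end Laman

section Generic

variable {m n a b : ℕ}

/-- The bipartite rigidity matrix `R_{m,n}(a,b)`, with entries in the polynomial ring rather than
in its fraction field, so that the indeterminates can be specialized. -/
def genericRigidityMatrix (m n a b : ℕ) :
    Matrix ((Fin a × Fin n) ⊕ (Fin b × Fin m)) (Fin m × Fin n)
      (MvPolynomial ((Fin m × Fin a) ⊕ (Fin n × Fin b)) ℚ) :=
  rigidityMatrix (Matrix.of fun p j ↦ MvPolynomial.X (Sum.inl (p, j)))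
    (Matrix.of fun q l ↦ MvPolynomial.X (Sum.inr (q, l)))

lemma col_map_genericRigidityMatrix (m n a b : ℕ) :
    ((genericRigidityMatrix m n a b).map (algebraMap _ (RField m n a b))).col =
      rigCol m n a b := by
  rw [genericRigidityMatrix, map_rigidityMatrix]
  funext e row
  rcases row with ⟨j, k⟩ | ⟨l, i⟩ <;> rfl

lemma map_eval_genericRigidityMatrix (x : Matrix (Fin m) (Fin a) ℚ)
    (y : Matrix (Fin n) (Fin b) ℚ) :
    (genericRigidityMatrix m n a b).map
        (MvPolynomial.eval (Sum.elim (fun pj ↦ x pj.1 pj.2) fun ql ↦ y ql.1 ql.2)) =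
      rigidityMatrix x y := by
  rw [genericRigidityMatrix, map_rigidityMatrix]
  congr <;> ext <;> simp

lemma rigIndep_of_linearIndepOn {U : Finset (Fin m × Fin n)} {x : Matrix (Fin m) (Fin a) ℚ}
    {y : Matrix (Fin n) (Fin b) ℚ} (h : LinearIndepOn ℚ (rigidityMatrix x y).col U) :
    RigIndep m n a b U := by
  rw [← map_eval_genericRigidityMatrix] at h
  rw [RigIndep, ← col_map_genericRigidityMatrix]
  exact linearIndependent_col_map_of_specialization
    (A := (genericRigidityMatrix m n a b).submatrix id fun e : (U : Set (Fin m × Fin n)) ↦ e.1)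
    (fun c ↦ ⟨MvPolynomial.C c, MvPolynomial.eval_C c⟩) (IsFractionRing.injective _ _) h

lemma not_rigIndep_of_violatesLaman {U : Finset (Fin m × Fin n)} (hU : ViolatesLaman m n a b U) :
    ¬ RigIndep m n a b U := by
  obtain ⟨S, T, hS, hT, hlt⟩ := hU
  rw [RigIndep, ← col_map_genericRigidityMatrix, genericRigidityMatrix, map_rigidityMatrix]
  intro hindep
  obtain ⟨M, hM, hM0⟩ := exists_isStressOn_ne_zero
    (K := RField m n a b) (α := Fin a) (β := Fin b) (U := U) _ _
    (by simpa using hS) (by simpa using hT) (by simpa using hlt)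
  exact hM0 (linearIndepOn_col_rigidityMatrix_iff.1 hindep M hM)

lemma rigIndep_iff_not_violatesLaman (ha : a ≤ m) (hma : m ≤ a + 2)
    {U : Finset (Fin m × Fin n)} : RigIndep m n a b U ↔ ¬ ViolatesLaman m n a b U := by
  refine ⟨fun h hU ↦ not_rigIndep_of_violatesLaman hU h, fun hU ↦ ?_⟩
  obtain ⟨P, hP⟩ := exists_pairs_of_not_violatesLaman ha hma hU
  have hinj : Function.Injective fun p : Fin m ↦ (p : ℚ) :=
    Nat.cast_injective.comp Fin.val_injective
  exact rigIndep_of_linearIndepOn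
    (linearIndepOn_col_rigidityMatrix_iff.2 fun M hM ↦ hM.eq_zero_of_pairs hinj hP)

end Generic

theorem circuits_eq_minimal_laman_violators (m n a b : ℕ) (ha : a ≤ m) (hb : b ≤ n)
    (hma : m ≤ a + 2) (C : Finset (Fin m × Fin n)) :
    RigCircuit m n a b C ↔ MinimalLamanViolator m n a b C := by
  simp only [RigCircuit, MinimalLamanViolator, rigIndep_iff_not_violatesLaman ha hma, not_not]
end
end
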